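/- Let m ≥ 3 and let b̃ : ℝ^m → ℝ be continuous, satisfy 0 ≤ b̃(x) ≤ C(1+|x|²)^{-2} for all x ∈ ℝ^m and some constant C > 0, and suppose b̃ is not identically zero (i.e., b̃(x₀) > 0 for some x₀ ∈ ℝ^m). Then the infimum S_{b̃} of the weighted Sobolev quotient Q_{b̃} over all admissible functions is not attained: every admissible function f satisfies Q_{b̃}(f) > S_{b̃}. -/

import Mathlib

open MeasureTheory

/-- The critical Sobolev exponent integral `∫ |f|^{2*}` with `2* = 2m/(m-2)`. -/
noncomputable def critInt (m : ℕ) (f : EuclideanSpace ℝ (Fin m) → ℝ) : ℝ :=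
  ∫ x : EuclideanSpace ℝ (Fin m), |f x| ^ ((2 * (m : ℝ)) / ((m : ℝ) - 2))

/-- A function `f : ℝ^m → ℝ` is admissible if it is `C¹`, `0 < ∫ |f|^{2*} < ∞`
and `∫ ‖∇f‖² < ∞`. -/
def Admissible (m : ℕ) (f : EuclideanSpace ℝ (Fin m) → ℝ) : Prop :=
  ContDiff ℝ 1 f ∧
  Integrable (fun x : EuclideanSpace ℝ (Fin m) =>
    |f x| ^ ((2 * (m : ℝ)) / ((m : ℝ) - 2))) ∧
  0 < critInt m f ∧
  Integrable (fun x : EuclideanSpace ℝ (Fin m) => ‖fderiv ℝ f x‖ ^ 2)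

/-- The weighted Sobolev quotient `Q_b(f)`; note `2/2* = (m-2)/m`. -/
noncomputable def sobolevQuot (m : ℕ) (b : EuclideanSpace ℝ (Fin m) → ℝ)
    (f : EuclideanSpace ℝ (Fin m) → ℝ) : ℝ :=
  (∫ x : EuclideanSpace ℝ (Fin m), (‖fderiv ℝ f x‖ ^ 2 + b x * f x ^ 2)) /
    (critInt m f) ^ (((m : ℝ) - 2) / (m : ℝ))

/-- The infimum `S_b` of the weighted Sobolev quotient over all admissible functions. -/
noncomputable def sobolevInf (m : ℕ) (b : EuclideanSpace ℝ (Fin m) → ℝ) : ℝ :=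
  sInf {r : ℝ | ∃ f, Admissible m f ∧ sobolevQuot m b f = r}

open Filter Topology InnerProductSpace Laplacian Gradient

/-!
Concentrating an admissible function `g` at the origin by dilations makes the weight invisible,
because `∫ b^{m/2}` is dilation invariant while the rescaled weights tend to `0` pointwise; hence
`S_b ≤ Q_0(g)`. If `f` attained `S_b`, then `Q_0(f) ≤ Q_b(f) = S_b ≤ Q_0(g)` for all `g`. Thus `f`
minimizes the unweighted quotient and, taking `g = f`, also `∫ b f² = 0`, so that `f` vanishes on a
ball on which `b > 0`.

A minimizer of `Q_0` cannot vanish on a ball. Adding to `|f|` a small nonnegative test function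
`s φ` increases the critical integral, so it cannot decrease the Dirichlet integral to first order
in `s`; this says that `|f|` is weakly superharmonic. The strong maximum principle then forces
`f = 0` everywhere. It is obtained by testing `Δ|f| ≤ 0` with the barrier
`(R² - ‖x - c‖²)₊ ^ (k+3)`, whose Laplacian is negative only inside the ball on which `f` already
vanishes.
-/

section WeakConvergence

lemma exists_mul_le_rpow_add_rpow {p q : ℝ} (hpq : p.HolderConjugate q) {δ : ℝ} (hδ : 0 < δ) :
    ∃ K : ℝ, ∀ a b : ℝ, 0 ≤ a → 0 ≤ b → a * b ≤ δ * a ^ p + K * b ^ q := by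
  set ε := δ ^ p⁻¹
  have hε : 0 < ε := by positivity
  refine ⟨(ε⁻¹) ^ q, fun a b ha hb => ?_⟩
  have div_le {x r : ℝ} (hx : 0 ≤ x) (hr : 1 < r) : x / r ≤ x := div_le_self hx hr.le
  calc a * b = (ε * a) * (ε⁻¹ * b) := by field_simp
    _ ≤ (ε * a) ^ p / p + (ε⁻¹ * b) ^ q / q :=
        Real.young_inequality_of_nonneg (by positivity) (by positivity) hpq
    _ ≤ (ε * a) ^ p + (ε⁻¹ * b) ^ q :=
        add_le_add (div_le (by positivity) hpq.lt) (div_le (by positivity) hpq.symm.lt)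
    _ = δ * a ^ p + (ε⁻¹) ^ q * b ^ q := by
        rw [Real.mul_rpow hε.le ha, Real.mul_rpow (by positivity) hb,
          Real.rpow_inv_rpow hδ.le hpq.ne_zero]

variable {α ι : Type*} [MeasurableSpace α] {μ : Measure α} {l : Filter ι}
  {p q : ℝ} {w : ι → α → ℝ} {F : α → ℝ}

lemma integrable_mul_of_integrable_rpow (hpq : p.HolderConjugate q) {v : α → ℝ}
    (hv : AEStronglyMeasurable v μ) (hvp : Integrable (fun x => |v x| ^ p) μ)
    (hF : AEStronglyMeasurable F μ) (hFq : Integrable (fun x => |F x| ^ q) μ) :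
    Integrable (fun x => v x * F x) μ := by
  obtain ⟨K, hK⟩ := exists_mul_le_rpow_add_rpow hpq one_pos
  refine ((hvp.const_mul 1).add (hFq.const_mul K)).mono' (hv.mul hF) (.of_forall fun x => ?_)
  rw [Real.norm_eq_abs, abs_mul]
  exact hK _ _ (abs_nonneg _) (abs_nonneg _)

/- The truncation `max (|w F| - δ |w| ^ p) 0` is dominated by a multiple of `|F| ^ q`, although
`|w F|` itself need not be dominated. -/
lemma tendsto_integral_max_abs_mul_sub_rpow [l.IsCountablyGenerated] (hpq : p.HolderConjugate q)
    (hw : ∀ i, AEStronglyMeasurable (w i) μ)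
    (hlim : ∀ᵐ x ∂μ, Tendsto (fun i => w i x) l (𝓝 0))
    (hF : AEStronglyMeasurable F μ) (hFq : Integrable (fun x => |F x| ^ q) μ)
    {δ : ℝ} (hδ : 0 < δ) :
    (∀ i, Integrable (fun x => max (|w i x * F x| - δ * |w i x| ^ p) 0) μ) ∧
      Tendsto (fun i => ∫ x, max (|w i x * F x| - δ * |w i x| ^ p) 0 ∂μ) l (𝓝 0) := by
  obtain ⟨K, hK⟩ := exists_mul_le_rpow_add_rpow hpq hδ
  have hmeas (i) : AEStronglyMeasurable (fun x => max (|w i x * F x| - δ * |w i x| ^ p) 0) μ :=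
    (((((hw i).mul hF).norm).aemeasurable.sub
      (((hw i).norm.aemeasurable.pow_const p).const_mul δ)).max
      aemeasurable_const).aestronglyMeasurable
  have hdom (i x) : ‖max (|w i x * F x| - δ * |w i x| ^ p) 0‖ ≤ |K| * |F x| ^ q := by
    rw [Real.norm_of_nonneg (le_max_right _ _)]
    refine max_le ?_ (by positivity)
    have hyoung := hK |w i x| |F x| (abs_nonneg _) (abs_nonneg _)
    have hKabs : K * |F x| ^ q ≤ |K| * |F x| ^ q := by gcongr; exact le_abs_self K
    rw [abs_mul]
    linarith
  refine ⟨fun i => (hFq.const_mul |K|).mono' (hmeas i) (.of_forall (hdom i)), ?_⟩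
  suffices hpt : ∀ᵐ x ∂μ, Tendsto (fun i => max (|w i x * F x| - δ * |w i x| ^ p) 0) l (𝓝 0) by
    simpa using tendsto_integral_filter_of_dominated_convergence _ (.of_forall hmeas)
      (.of_forall fun i => .of_forall (hdom i)) (hFq.const_mul |K|) hpt
  filter_upwards [hlim] with x hx
  have hp : Tendsto (fun i => |w i x| ^ p) l (𝓝 0) := by
    simpa [hpq.ne_zero] using hx.abs.rpow_const (p := p) (.inr hpq.nonneg)
  simpa using (((hx.mul_const (F x)).abs).sub (hp.const_mul δ)).max (tendsto_const_nhds (x := 0))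

theorem tendsto_integral_mul_of_integral_rpow_le [l.IsCountablyGenerated]
    (hpq : p.HolderConjugate q) (hw : ∀ i, AEStronglyMeasurable (w i) μ)
    (hwp : ∀ i, Integrable (fun x => |w i x| ^ p) μ)
    {M : ℝ} (hM : ∀ i, ∫ x, |w i x| ^ p ∂μ ≤ M)
    (hlim : ∀ᵐ x ∂μ, Tendsto (fun i => w i x) l (𝓝 0))
    (hF : AEStronglyMeasurable F μ) (hFq : Integrable (fun x => |F x| ^ q) μ) :
    Tendsto (fun i => ∫ x, w i x * F x ∂μ) l (𝓝 0) := by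
  suffices habs : ∀ δ > 0, ∀ᶠ i in l, ∫ x, |w i x * F x| ∂μ ≤ δ * (|M| + 1) by
    refine Metric.tendsto_nhds.2 fun ε hε => ?_
    filter_upwards [habs (ε / (2 * (|M| + 1))) (by positivity)] with i hi
    rw [dist_zero_right]
    calc ‖∫ x, w i x * F x ∂μ‖ ≤ ∫ x, |w i x * F x| ∂μ := norm_integral_le_integral_norm _
      _ ≤ ε / (2 * (|M| + 1)) * (|M| + 1) := hi
      _ = ε / 2 := by field_simp
      _ < ε := half_lt_self hε
  intro δ hδ
  obtain ⟨hint, htrunc⟩ := tendsto_integral_max_abs_mul_sub_rpow hpq hw hlim hF hFq hδ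
  filter_upwards [htrunc.eventually (gt_mem_nhds hδ)] with i hi
  have hsplit (x) : |w i x * F x| ≤
      δ * |w i x| ^ p + max (|w i x * F x| - δ * |w i x| ^ p) 0 := by
    linarith [le_max_left (|w i x * F x| - δ * |w i x| ^ p) 0]
  calc ∫ x, |w i x * F x| ∂μ
      ≤ ∫ x, (δ * |w i x| ^ p + max (|w i x * F x| - δ * |w i x| ^ p) 0) ∂μ :=
        integral_mono_of_nonneg (.of_forall fun x => abs_nonneg _)
          (((hwp i).const_mul δ).add (hint i)) (.of_forall hsplit)
    _ = δ * ∫ x, |w i x| ^ p ∂μ + ∫ x, max (|w i x * F x| - δ * |w i x| ^ p) 0 ∂μ := by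
        rw [integral_add ((hwp i).const_mul δ) (hint i), integral_const_mul]
    _ ≤ δ * |M| + δ := by gcongr; exact (hM i).trans (le_abs_self M)
    _ = δ * (|M| + 1) := by ring

end WeakConvergence

section PosPartPow

lemma hasDerivAt_max_zero_pow (n : ℕ) (y : ℝ) :
    HasDerivAt (fun y : ℝ => max y 0 ^ (n + 2)) ((n + 2) * max y 0 ^ (n + 1)) y := by
  rcases lt_trichotomy y 0 with hy | rfl | hy
  · have hzero : (fun y : ℝ => max y 0 ^ (n + 2)) =ᶠ[𝓝 y] fun _ => 0 := by
      filter_upwards [gt_mem_nhds hy] with z hz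
      simp [max_eq_right hz.le]
    simpa [max_eq_right hy.le] using (hasDerivAt_const y (0 : ℝ)).congr_of_eventuallyEq hzero
  · have hbig : (fun y : ℝ => max y 0 ^ (n + 2)) =O[𝓝 0] fun y => y ^ (n + 2) := by
      refine .of_bound' (.of_forall fun y => ?_)
      rw [norm_pow, norm_pow, Real.norm_of_nonneg (le_max_right _ _)]
      exact pow_le_pow_left₀ (le_max_right _ _) (max_le (le_abs_self y) (abs_nonneg y)) _
    have hlittle : (fun y : ℝ => y ^ (n + 2)) =o[𝓝 0] fun y => y := by
      simpa using Asymptotics.isLittleO_pow_pow (𝕜 := ℝ) (show 1 < n + 2 by omega)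
    refine hasDerivAt_iff_isLittleO.2 ?_
    simpa using hbig.trans_isLittleO hlittle
  · have hpow : (fun y : ℝ => max y 0 ^ (n + 2)) =ᶠ[𝓝 y] fun y => y ^ (n + 2) := by
      filter_upwards [lt_mem_nhds hy] with z hz
      rw [max_eq_left hz.le]
    simpa [max_eq_left hy.le] using (hasDerivAt_pow (n + 2) y).congr_of_eventuallyEq hpow

lemma deriv_max_zero_pow (n : ℕ) :
    deriv (fun y : ℝ => max y 0 ^ (n + 2)) = fun y : ℝ => (n + 2) * max y 0 ^ (n + 1) :=
  funext fun y => (hasDerivAt_max_zero_pow n y).deriv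

lemma contDiff_max_zero_pow (n : ℕ) : ContDiff ℝ n fun y : ℝ => max y 0 ^ (n + 1) := by
  induction n with
  | zero => exact contDiff_zero.2 (by fun_prop)
  | succ n ih =>
    push_cast
    refine contDiff_succ_iff_deriv.2
      ⟨fun y => (hasDerivAt_max_zero_pow n y).differentiableAt, by simp, ?_⟩
    rw [deriv_max_zero_pow]
    exact contDiff_const.mul ih

end PosPartPow

section Laplacian

variable {E : Type*} [NormedAddCommGroup E] [InnerProductSpace ℝ E]

lemma hasFDerivAt_comp_norm_sub_sq {h : ℝ → ℝ} {c x : E}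
    (hh : DifferentiableAt ℝ h (‖x - c‖ ^ 2)) :
    HasFDerivAt (fun x => h (‖x - c‖ ^ 2))
      ((2 * deriv h (‖x - c‖ ^ 2)) • innerSL ℝ (x - c)) x := by
  have hsq : HasFDerivAt (fun x : E => ‖x - c‖ ^ 2) (2 • innerSL ℝ (x - c)) x := by
    simpa using ((hasFDerivAt_id x).sub_const c).norm_sq
  refine (hh.hasDerivAt.comp_hasFDerivAt x hsq).congr_fderiv ?_
  module

variable [FiniteDimensional ℝ E]

lemma continuous_laplacian {φ : E → ℝ} (hφ : ContDiff ℝ 2 φ) : Continuous (Δ φ) := by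
  rw [laplacian_eq_iteratedFDeriv_stdOrthonormalBasis]
  exact continuous_finsetSum _ fun i _ =>
    (continuous_eval_const _).comp (hφ.continuous_iteratedFDeriv le_rfl)

lemma hasCompactSupport_laplacian {φ : E → ℝ} (hφ : HasCompactSupport φ) :
    HasCompactSupport (Δ φ) := by
  refine (hφ.iteratedFDeriv (𝕜 := ℝ) 2).mono fun x hx h0 => hx ?_
  simp [laplacian_eq_iteratedFDeriv_stdOrthonormalBasis, h0]

lemma continuous_gradient {φ : E → ℝ} (hφ : ContDiff ℝ 1 φ) : Continuous (∇ φ) :=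
  (toDual ℝ E).symm.continuous.comp (hφ.continuous_fderiv one_ne_zero)

lemma inner_gradient_eq_sum {ι : Type*} [Fintype ι] (e : OrthonormalBasis ι ℝ E) (u φ : E → ℝ)
    (x : E) : ⟪∇ u x, ∇ φ x⟫_ℝ = ∑ i, fderiv ℝ u x (e i) * fderiv ℝ φ x (e i) := by
  rw [← e.sum_inner_mul_inner]
  refine Finset.sum_congr rfl fun i _ => ?_
  rw [inner_gradient_left, inner_gradient_right, conj_trivial]

lemma laplacian_eq_sum_fderiv {φ : E → ℝ} (hφ : ContDiff ℝ 2 φ) (x : E) :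
    Δ φ x = ∑ i, fderiv ℝ (fun y => fderiv ℝ φ y (stdOrthonormalBasis ℝ E i)) x
      (stdOrthonormalBasis ℝ E i) := by
  have hdiff : DifferentiableAt ℝ (fderiv ℝ φ) x :=
    (hφ.fderiv_right (m := 1) le_rfl).differentiable one_ne_zero x
  rw [laplacian_eq_iteratedFDeriv_stdOrthonormalBasis]
  refine Finset.sum_congr rfl fun i _ => ?_
  rw [iteratedFDeriv_two_apply, fderiv_clm_apply hdiff (differentiableAt_const _)]
  simp

theorem laplacian_comp_norm_sub_sq {h : ℝ → ℝ} (hh : ContDiff ℝ 2 h) (c x : E) :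
    Δ (fun x => h (‖x - c‖ ^ 2)) x =
      4 * ‖x - c‖ ^ 2 * deriv (deriv h) (‖x - c‖ ^ 2) +
        2 * Module.finrank ℝ E * deriv h (‖x - c‖ ^ 2) := by
  have hd : Differentiable ℝ h := hh.differentiable two_ne_zero
  have hd' : Differentiable ℝ (deriv h) :=
    ((contDiff_succ_iff_deriv (n := 1)).1 hh).2.2.differentiable one_ne_zero
  have hsecond (e : E) : fderiv ℝ (fun y => fderiv ℝ (fun x => h (‖x - c‖ ^ 2)) y e) x e =
      4 * deriv (deriv h) (‖x - c‖ ^ 2) * ⟪e, x - c⟫_ℝ ^ 2 +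
        2 * deriv h (‖x - c‖ ^ 2) * ‖e‖ ^ 2 := by
    have hfirst : (fun y => fderiv ℝ (fun x => h (‖x - c‖ ^ 2)) y e) =
        fun y => 2 * deriv h (‖y - c‖ ^ 2) * ⟪e, y - c⟫_ℝ := by
      ext y
      rw [(hasFDerivAt_comp_norm_sub_sq (hd (‖y - c‖ ^ 2))).fderiv, real_inner_comm]
      rfl
    have hinner : HasFDerivAt (fun y : E => ⟪e, y - c⟫_ℝ) (innerSL ℝ e) x :=
      (innerSL ℝ e).hasFDerivAt.comp x ((hasFDerivAt_id x).sub_const c)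
    have hprod := ((hasFDerivAt_comp_norm_sub_sq (hd' (‖x - c‖ ^ 2))).const_mul 2).fun_mul hinner
    rw [hfirst, hprod.fderiv]
    simp only [FunLike.coe_add, FunLike.coe_smul, Pi.add_apply, Pi.smul_apply,
      innerSL_apply_apply, real_inner_self_eq_norm_sq, real_inner_comm e, smul_eq_mul]
    rw [real_inner_comm]
    ring
  have hφ : ContDiff ℝ 2 fun x => h (‖x - c‖ ^ 2) :=
    hh.comp ((contDiff_id.sub contDiff_const).norm_sq ℝ)
  rw [laplacian_eq_sum_fderiv hφ]
  simp only [hsecond, Finset.sum_add_distrib, ← Finset.mul_sum,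
    (stdOrthonormalBasis ℝ E).sum_sq_inner_right, OrthonormalBasis.norm_eq_one, one_pow,
    Finset.sum_const, Finset.card_univ, Fintype.card_fin, nsmul_eq_mul, mul_one]
  ring

variable [MeasurableSpace E] [BorelSpace E]

theorem integral_inner_gradient_eq_neg_integral_mul_laplacian {u φ : E → ℝ}
    (hu : ContDiff ℝ 1 u) (hφ : ContDiff ℝ 2 φ) (hφs : HasCompactSupport φ) :
    ∫ x, ⟪∇ u x, ∇ φ x⟫_ℝ = -∫ x, u x * Δ φ x := by
  set e := stdOrthonormalBasis ℝ E
  have hφ' (i) : ContDiff ℝ 1 fun y => fderiv ℝ φ y (e i) :=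
    (hφ.fderiv_right le_rfl).clm_apply contDiff_const
  have hφs' (i) : HasCompactSupport fun y => fderiv ℝ φ y (e i) := hφs.fderiv_apply ℝ (e i)
  have hu' (i) : Continuous fun y => fderiv ℝ u y (e i) :=
    (hu.continuous_fderiv one_ne_zero).clm_apply continuous_const
  have hint_grad (i) : Integrable fun x => fderiv ℝ u x (e i) * fderiv ℝ φ x (e i) :=
    ((hu' i).mul (hφ' i).continuous).integrable_of_hasCompactSupport (hφs' i).mul_left
  have hint_second (i) :
      Integrable fun x => u x * fderiv ℝ (fun y => fderiv ℝ φ y (e i)) x (e i) :=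
    (hu.continuous.mul (((hφ' i).continuous_fderiv one_ne_zero).clm_apply
      continuous_const)).integrable_of_hasCompactSupport ((hφs' i).fderiv_apply ℝ (e i)).mul_left
  have hparts (i) := integral_mul_fderiv_eq_neg_fderiv_mul_of_integrable (hint_grad i)
    (hint_second i)
    ((hu.continuous.mul (hφ' i).continuous).integrable_of_hasCompactSupport (hφs' i).mul_left)
    (fun x _ => hu.differentiable one_ne_zero x)
    (fun x _ => (hφ' i).differentiable one_ne_zero x)
  simp only [inner_gradient_eq_sum e, laplacian_eq_sum_fderiv hφ, Finset.mul_sum]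
  rw [integral_finsetSum _ fun i _ => hint_grad i, integral_finsetSum _ fun i _ => hint_second i,
    ← Finset.sum_neg_distrib]
  exact Finset.sum_congr rfl fun i _ => by rw [hparts i, neg_neg]

end Laplacian

section StrongMaximumPrinciple

variable {E : Type*} [NormedAddCommGroup E]

/-- The compactly supported test function `(R² - ‖x - c‖²)₊ ^ (k + 3)`, for which the strong
maximum principle is proved: for large `k` it is strictly subharmonic on `r < ‖x - c‖ < R`. -/
def ballBarrier (c : E) (R : ℝ) (k : ℕ) (x : E) : ℝ := max (R ^ 2 - ‖x - c‖ ^ 2) 0 ^ (k + 3)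

namespace ballBarrier

variable (c : E) {R r : ℝ} (k : ℕ)

lemma nonneg (x : E) : 0 ≤ ballBarrier c R k x := pow_nonneg (le_max_right _ _) _

lemma contDiff_profile (R : ℝ) : ContDiff ℝ 2 fun ρ : ℝ => max (R ^ 2 - ρ) 0 ^ (k + 3) :=
  ((contDiff_max_zero_pow (k + 2)).of_le (by exact_mod_cast Nat.le_add_left 2 k)).comp
    (contDiff_const.sub contDiff_id)

variable [InnerProductSpace ℝ E]

lemma contDiff : ContDiff ℝ 2 (ballBarrier c R k) :=
  (contDiff_profile k R).comp ((contDiff_id.sub contDiff_const).norm_sq ℝ)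

variable [FiniteDimensional ℝ E]

lemma hasCompactSupport (hR : 0 ≤ R) : HasCompactSupport (ballBarrier c R k) := by
  refine HasCompactSupport.intro (isCompact_closedBall c R) fun x hx => ?_
  rw [mem_closedBall_iff_norm, not_le] at hx
  have hle : R ^ 2 - ‖x - c‖ ^ 2 ≤ 0 := by nlinarith
  rw [ballBarrier, max_eq_right hle, zero_pow (by omega)]

lemma laplacian_eq (x : E) :
    Δ (ballBarrier c R k) x = 2 * (k + 3) * max (R ^ 2 - ‖x - c‖ ^ 2) 0 ^ (k + 1) *
      (2 * (k + 2) * ‖x - c‖ ^ 2 - Module.finrank ℝ E * max (R ^ 2 - ‖x - c‖ ^ 2) 0) := by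
  have hderiv (n : ℕ) (ρ : ℝ) : HasDerivAt (fun ρ : ℝ => max (R ^ 2 - ρ) 0 ^ (n + 2))
      (-((n + 2) * max (R ^ 2 - ρ) 0 ^ (n + 1))) ρ := by
    simpa [Function.comp_def] using
      (hasDerivAt_max_zero_pow n (R ^ 2 - ρ)).comp ρ ((hasDerivAt_id ρ).const_sub (R ^ 2))
  have hfirst : deriv (fun ρ : ℝ => max (R ^ 2 - ρ) 0 ^ (k + 3)) =
      fun ρ : ℝ => -(((k : ℝ) + 3) * max (R ^ 2 - ρ) 0 ^ (k + 2)) := by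
    ext ρ
    rw [(hderiv (k + 1) ρ).deriv]
    push_cast
    ring
  have hsecond (ρ : ℝ) : deriv (deriv fun ρ : ℝ => max (R ^ 2 - ρ) 0 ^ (k + 3)) ρ =
      (k + 3) * ((k + 2) * max (R ^ 2 - ρ) 0 ^ (k + 1)) := by
    rw [hfirst, ((hderiv k ρ).const_mul _).fun_neg.deriv]
    ring
  have hradial := laplacian_comp_norm_sub_sq (contDiff_profile k R) c x
  rw [hsecond, hfirst] at hradial
  rw [show ballBarrier c R k = fun x => max (R ^ 2 - ‖x - c‖ ^ 2) 0 ^ (k + 3) from rfl, hradial]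
  ring

lemma exists_laplacian_pos (R : ℝ) (hr : 0 < r) :
    ∃ k, ∀ x, r ≤ ‖x - c‖ → 0 ≤ Δ (ballBarrier c R k) x ∧
      (‖x - c‖ < R → 0 < Δ (ballBarrier c R k) x) := by
  obtain ⟨k, hk⟩ := exists_nat_gt (Module.finrank ℝ E * R ^ 2 / (2 * r ^ 2))
  refine ⟨k, fun x hx => ?_⟩
  have hbracket : 0 < 2 * (k + 2) * ‖x - c‖ ^ 2 -
      Module.finrank ℝ E * max (R ^ 2 - ‖x - c‖ ^ 2) 0 := by
    have hmax : max (R ^ 2 - ‖x - c‖ ^ 2) 0 ≤ R ^ 2 :=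
      max_le (sub_le_self _ (sq_nonneg _)) (sq_nonneg R)
    have hsq : r ^ 2 ≤ ‖x - c‖ ^ 2 := by gcongr
    rw [div_lt_iff₀ (by positivity)] at hk
    nlinarith [mul_le_mul_of_nonneg_left hmax (Nat.cast_nonneg' (Module.finrank ℝ E) (α := ℝ)),
      mul_le_mul_of_nonneg_left hsq (Nat.cast_nonneg' k (α := ℝ)), sq_pos_of_pos hr]
  rw [laplacian_eq]
  refine ⟨by positivity, fun hxR => mul_pos ?_ hbracket⟩
  have hpos : 0 < max (R ^ 2 - ‖x - c‖ ^ 2) 0 := by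
    refine lt_max_of_lt_left (sub_pos.2 ?_)
    gcongr
  positivity

end ballBarrier

variable [InnerProductSpace ℝ E] [FiniteDimensional ℝ E] [MeasurableSpace E] [BorelSpace E]

/-- Superharmonicity `Δ v ≤ 0` in the sense of distributions. The notion is meant for locally
integrable `v`, so that the integrals below are not junk. -/
def IsWeaklySuperharmonic (v : E → ℝ) : Prop :=
  ∀ φ : E → ℝ, ContDiff ℝ 2 φ → HasCompactSupport φ → (∀ x, 0 ≤ φ x) → ∫ x, v x * Δ φ x ≤ 0

theorem IsWeaklySuperharmonic.eq_zero_of_eq_zero_on_ball {v : E → ℝ}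
    (hv : IsWeaklySuperharmonic v) (hcont : Continuous v) (hnonneg : ∀ x, 0 ≤ v x)
    {c : E} {r : ℝ} (hr : 0 < r) (hball : ∀ x ∈ Metric.ball c r, v x = 0) (x : E) : v x = 0 := by
  rcases lt_or_ge ‖x - c‖ r with hx | hx
  · exact hball x (mem_ball_iff_norm.2 hx)
  obtain ⟨k, hk⟩ := ballBarrier.exists_laplacian_pos c (‖x - c‖ + 1) hr
  set φ := ballBarrier c (‖x - c‖ + 1) k
  have hφs : HasCompactSupport φ := ballBarrier.hasCompactSupport c k (by positivity)
  have hφ : ContDiff ℝ 2 φ := ballBarrier.contDiff c k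
  have hprod_nonneg : 0 ≤ fun y => v y * Δ φ y := fun y => by
    rcases lt_or_ge ‖y - c‖ r with hy | hy
    · simp [hball y (mem_ball_iff_norm.2 hy)]
    · exact mul_nonneg (hnonneg y) (hk y hy).1
  by_contra hne
  have hpos : 0 < ∫ y, v y * Δ φ y :=
    (hcont.mul (continuous_laplacian hφ)).integral_pos_of_hasCompactSupport_nonneg_nonzero
      (hasCompactSupport_laplacian hφs).mul_left hprod_nonneg
      (mul_ne_zero hne ((hk x hx).2 (lt_add_one _)).ne')
  exact hpos.not_ge (hv φ hφ hφs (ballBarrier.nonneg c k))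

end StrongMaximumPrinciple

section SmoothAbs

/-- A `C¹` approximation of `|y|` from below whose derivative is bounded by `1`; it replaces the
modulus, for which `|f|` need not be `C¹`. -/
noncomputable def smoothAbs (ε y : ℝ) : ℝ := √(y ^ 2 + ε ^ 2) - ε

namespace smoothAbs

variable {ε : ℝ}

lemma nonneg (ε y : ℝ) : 0 ≤ smoothAbs ε y :=
  sub_nonneg.2 (Real.le_sqrt_of_sq_le (le_add_of_nonneg_left (sq_nonneg y)))

lemma le_abs (hε : 0 ≤ ε) (y : ℝ) : smoothAbs ε y ≤ |y| := by
  refine sub_le_iff_le_add.2 (Real.sqrt_le_iff.2 ⟨by positivity, ?_⟩)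
  nlinarith [sq_abs y, mul_nonneg (abs_nonneg y) hε]

lemma abs_le_abs (hε : 0 ≤ ε) (y : ℝ) : |smoothAbs ε y| ≤ |y| :=
  (abs_of_nonneg (nonneg ε y)).trans_le (le_abs hε y)

lemma tendsto_abs {ι : Type*} {l : Filter ι} {ε : ι → ℝ} (hε : Tendsto ε l (𝓝 0)) (y : ℝ) :
    Tendsto (fun i => smoothAbs (ε i) y) l (𝓝 |y|) := by
  have habs : √(y ^ 2 + 0 ^ 2) - 0 = |y| := by simp [Real.sqrt_sq_eq_abs]
  exact habs ▸ (((hε.pow 2).const_add (y ^ 2)).sqrt).sub hε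

lemma continuous (ε : ℝ) : Continuous (smoothAbs ε) := by
  unfold smoothAbs
  fun_prop

lemma contDiff (hε : ε ≠ 0) {n : WithTop ℕ∞} : ContDiff ℝ n (smoothAbs ε) :=
  (((contDiff_id.pow 2).add contDiff_const).sqrt fun y => by positivity).sub contDiff_const

lemma hasDerivAt (hε : ε ≠ 0) (y : ℝ) :
    HasDerivAt (smoothAbs ε) (y / √(y ^ 2 + ε ^ 2)) y := by
  have hpos : y ^ 2 + ε ^ 2 ≠ 0 := by positivity
  refine ((((hasDerivAt_pow 2 y).add_const (ε ^ 2)).sqrt hpos).sub_const ε).congr_deriv ?_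
  field_simp
  norm_num

lemma norm_fderiv_comp_le (hε : ε ≠ 0) {E : Type*} [NormedAddCommGroup E] [NormedSpace ℝ E]
    {f : E → ℝ} {x : E} (hf : DifferentiableAt ℝ f x) :
    ‖fderiv ℝ (fun x => smoothAbs ε (f x)) x‖ ≤ ‖fderiv ℝ f x‖ := by
  have hslope : ‖f x / √(f x ^ 2 + ε ^ 2)‖ ≤ 1 := by
    rw [norm_div, Real.norm_of_nonneg (Real.sqrt_nonneg _), Real.norm_eq_abs]
    exact div_le_one_of_le₀ (Real.abs_le_sqrt (le_add_of_nonneg_right (sq_nonneg ε)))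
      (Real.sqrt_nonneg _)
  have hcomp := (hasDerivAt hε (f x)).comp_hasFDerivAt x hf.hasFDerivAt
  calc ‖fderiv ℝ (fun x => smoothAbs ε (f x)) x‖
      = ‖f x / √(f x ^ 2 + ε ^ 2)‖ * ‖fderiv ℝ f x‖ := by
        rw [← norm_smul, ← hcomp.fderiv, Function.comp_def]
    _ ≤ ‖fderiv ℝ f x‖ := mul_le_of_le_one_left (norm_nonneg _) hslope

lemma tendsto_integral_comp_mul {α ι : Type*} [MeasurableSpace α] {μ : Measure α} {l : Filter ι}
    [l.IsCountablyGenerated] {f g : α → ℝ} {ε : ι → ℝ} (hε : Tendsto ε l (𝓝 0))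
    (hε_nonneg : ∀ i, 0 ≤ ε i) (hf : AEStronglyMeasurable f μ) (hg : AEStronglyMeasurable g μ)
    (hfg : Integrable (fun x => f x * g x) μ) :
    Tendsto (fun i => ∫ x, smoothAbs (ε i) (f x) * g x ∂μ) l (𝓝 (∫ x, |f x| * g x ∂μ)) := by
  refine tendsto_integral_filter_of_dominated_convergence _ (.of_forall fun i => ?_)
    (.of_forall fun i => .of_forall fun x => ?_) hfg.norm
    (.of_forall fun x => (tendsto_abs hε (f x)).mul_const (g x))
  · exact ((continuous (ε i)).comp_aestronglyMeasurable hf).mul hg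
  · rw [norm_mul, norm_mul]
    exact mul_le_mul_of_nonneg_right (abs_le_abs (hε_nonneg i) _) (norm_nonneg _)

end smoothAbs

end SmoothAbs

section DirichletIntegral

variable {E : Type*} [NormedAddCommGroup E] [InnerProductSpace ℝ E] [FiniteDimensional ℝ E]
  {u φ : E → ℝ}

lemma norm_fderiv_add_const_mul_sq {x : E} (hu : DifferentiableAt ℝ u x)
    (hφ : DifferentiableAt ℝ φ x) (s : ℝ) :
    ‖fderiv ℝ (fun x => u x + s * φ x) x‖ ^ 2 =
      ‖fderiv ℝ u x‖ ^ 2 + 2 * s * ⟪∇ u x, ∇ φ x⟫_ℝ + s ^ 2 * ‖fderiv ℝ φ x‖ ^ 2 := by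
  have hnorm (h : E → ℝ) : ‖fderiv ℝ h x‖ = ‖∇ h x‖ :=
    ((toDual ℝ E).symm.norm_map (fderiv ℝ h x)).symm
  have hgrad : ∇ (fun x => u x + s * φ x) x = ∇ u x + s • ∇ φ x := by
    rw [gradient, fderiv_fun_add hu (hφ.const_mul s), fderiv_const_mul hφ, map_add, map_smul,
      gradient, gradient]
  rw [hnorm, hnorm, hnorm, hgrad, norm_add_sq_real, inner_smul_right, norm_smul, mul_pow,
    Real.norm_eq_abs, sq_abs]
  ring

variable [MeasurableSpace E] [BorelSpace E]

lemma integrable_inner_gradient (hu : ContDiff ℝ 1 u) (hφ : ContDiff ℝ 1 φ)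
    (hφs : HasCompactSupport φ) : Integrable fun x => ⟪∇ u x, ∇ φ x⟫_ℝ :=
  ((continuous_gradient hu).inner (continuous_gradient hφ)).integrable_of_hasCompactSupport
    ((hφs.fderiv ℝ).mono fun x hx h0 => hx (by simp [gradient, h0]))

lemma integrable_norm_fderiv_sq_of_hasCompactSupport (hφ : ContDiff ℝ 1 φ)
    (hφs : HasCompactSupport φ) : Integrable fun x => ‖fderiv ℝ φ x‖ ^ 2 :=
  ((hφ.continuous_fderiv one_ne_zero).norm.pow 2).integrable_of_hasCompactSupport
    ((hφs.fderiv ℝ).mono fun x hx h0 => hx (by simp [h0]))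

lemma integrable_norm_fderiv_add_const_mul_sq (hu : ContDiff ℝ 1 u)
    (hu2 : Integrable fun x => ‖fderiv ℝ u x‖ ^ 2) (hφ : ContDiff ℝ 1 φ)
    (hφs : HasCompactSupport φ) (s : ℝ) :
    Integrable fun x => ‖fderiv ℝ (fun x => u x + s * φ x) x‖ ^ 2 := by
  simp only [norm_fderiv_add_const_mul_sq (hu.differentiable one_ne_zero _)
    (hφ.differentiable one_ne_zero _)]
  exact (hu2.add ((integrable_inner_gradient hu hφ hφs).const_mul _)).add
    ((integrable_norm_fderiv_sq_of_hasCompactSupport hφ hφs).const_mul _)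

theorem integral_norm_fderiv_add_const_mul_sq (hu : ContDiff ℝ 1 u)
    (hu2 : Integrable fun x => ‖fderiv ℝ u x‖ ^ 2) (hφ : ContDiff ℝ 2 φ)
    (hφs : HasCompactSupport φ) (s : ℝ) :
    ∫ x, ‖fderiv ℝ (fun x => u x + s * φ x) x‖ ^ 2 =
      (∫ x, ‖fderiv ℝ u x‖ ^ 2) - 2 * s * (∫ x, u x * Δ φ x) + s ^ 2 * ∫ x, ‖fderiv ℝ φ x‖ ^ 2 := by
  have hφ1 : ContDiff ℝ 1 φ := hφ.of_le one_le_two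
  have hint_inner : Integrable fun x => 2 * s * ⟪∇ u x, ∇ φ x⟫_ℝ :=
    (integrable_inner_gradient hu hφ1 hφs).const_mul _
  have hint_sum : Integrable fun x => ‖fderiv ℝ u x‖ ^ 2 + 2 * s * ⟪∇ u x, ∇ φ x⟫_ℝ :=
    hu2.add hint_inner
  have hint_φ : Integrable fun x => s ^ 2 * ‖fderiv ℝ φ x‖ ^ 2 :=
    (integrable_norm_fderiv_sq_of_hasCompactSupport hφ1 hφs).const_mul _
  calc ∫ x, ‖fderiv ℝ (fun x => u x + s * φ x) x‖ ^ 2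
      = ∫ x, (‖fderiv ℝ u x‖ ^ 2 + 2 * s * ⟪∇ u x, ∇ φ x⟫_ℝ + s ^ 2 * ‖fderiv ℝ φ x‖ ^ 2) := by
        simp only [norm_fderiv_add_const_mul_sq (hu.differentiable one_ne_zero _)
          (hφ1.differentiable one_ne_zero _)]
    _ = (∫ x, ‖fderiv ℝ u x‖ ^ 2) + 2 * s * (∫ x, ⟪∇ u x, ∇ φ x⟫_ℝ) +
          s ^ 2 * ∫ x, ‖fderiv ℝ φ x‖ ^ 2 := by
        rw [integral_add hint_sum hint_φ, integral_add hu2 hint_inner,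
          integral_const_mul, integral_const_mul]
    _ = _ := by
        rw [integral_inner_gradient_eq_neg_integral_mul_laplacian hu hφ hφs]
        ring

end DirichletIntegral

section FiniteEnergy

/-- The critical Sobolev exponent `2*`. -/
noncomputable def critExponent (m : ℕ) : ℝ := 2 * m / (m - 2)

lemma holderConjugate_critExponent_div_two {m : ℕ} (hm : 3 ≤ m) :
    ((m : ℝ) / 2).HolderConjugate (critExponent m / 2) := by
  have hm' : (3 : ℝ) ≤ m := by exact_mod_cast hm
  have : (0 : ℝ) < m - 2 := by linarith
  refine Real.holderConjugate_iff.2 ⟨by linarith, ?_⟩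
  rw [critExponent]
  field_simp
  ring

lemma critExponent_pos {m : ℕ} (hm : 3 ≤ m) : 0 < critExponent m := by
  linarith [(holderConjugate_critExponent_div_two hm).symm.pos]

lemma sub_two_div_self_pos {m : ℕ} (hm : 3 ≤ m) : 0 < ((m : ℝ) - 2) / m := by
  have hm' : (3 : ℝ) ≤ m := by exact_mod_cast hm
  exact div_pos (by linarith) (by linarith)

variable {m : ℕ} {f g : EuclideanSpace ℝ (Fin m) → ℝ}

lemma critInt_eq (f : EuclideanSpace ℝ (Fin m) → ℝ) :
    critInt m f = ∫ x, |f x| ^ critExponent m := rfl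

lemma critInt_nonneg (f : EuclideanSpace ℝ (Fin m) → ℝ) : 0 ≤ critInt m f :=
  integral_nonneg fun _ => by positivity

/-- The admissible functions together with `0`: a linear space, in which test functions can be
added to `f` without having to exclude cancellation. -/
structure HasFiniteEnergy (m : ℕ) (f : EuclideanSpace ℝ (Fin m) → ℝ) : Prop where
  contDiff : ContDiff ℝ 1 f
  integrable_abs_rpow : Integrable fun x => |f x| ^ critExponent m
  integrable_norm_fderiv_sq : Integrable fun x => ‖fderiv ℝ f x‖ ^ 2

lemma admissible_iff : Admissible m f ↔ HasFiniteEnergy m f ∧ 0 < critInt m f :=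
  ⟨fun ⟨hf, hfp, hpos, hf2⟩ => ⟨⟨hf, hfp, hf2⟩, hpos⟩,
    fun ⟨⟨hf, hfp, hf2⟩, hpos⟩ => ⟨hf, hfp, hpos, hf2⟩⟩

lemma memLp_critExponent_iff (hm : 3 ≤ m) (hf : AEStronglyMeasurable f) :
    MemLp f (ENNReal.ofReal (critExponent m)) ↔ Integrable fun x => |f x| ^ critExponent m := by
  have hpos := critExponent_pos hm
  rw [← integrable_norm_rpow_iff hf (ENNReal.ofReal_pos.2 hpos).ne' ENNReal.ofReal_ne_top,
    ENNReal.toReal_ofReal hpos.le]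
  rfl

namespace HasFiniteEnergy

lemma add_const_mul_of_hasCompactSupport (hm : 3 ≤ m) (hf : HasFiniteEnergy m f)
    {φ : EuclideanSpace ℝ (Fin m) → ℝ} (hφ : ContDiff ℝ 1 φ) (hφs : HasCompactSupport φ) (s : ℝ) :
    HasFiniteEnergy m fun x => f x + s * φ x where
  contDiff := hf.contDiff.add (contDiff_const.mul hφ)
  integrable_abs_rpow := by
    have hf_meas : AEStronglyMeasurable f := hf.contDiff.continuous.aestronglyMeasurable
    have hφp : MemLp (fun x => s * φ x) (ENNReal.ofReal (critExponent m)) :=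
      (hφ.continuous.memLp_of_hasCompactSupport hφs).const_mul s
    have hsum := ((memLp_critExponent_iff hm hf_meas).2 hf.integrable_abs_rpow).add hφp
    exact (memLp_critExponent_iff hm hsum.1).1 hsum
  integrable_norm_fderiv_sq :=
    integrable_norm_fderiv_add_const_mul_sq hf.contDiff hf.integrable_norm_fderiv_sq hφ hφs s

lemma smoothAbs_comp (hm : 3 ≤ m) (hf : HasFiniteEnergy m f) {ε : ℝ} (hε : 0 < ε) :
    HasFiniteEnergy m fun x => smoothAbs ε (f x) := by
  have hsmooth : ContDiff ℝ 1 fun x => smoothAbs ε (f x) :=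
    (smoothAbs.contDiff hε.ne').comp hf.contDiff
  have hpos := critExponent_pos hm
  refine ⟨hsmooth, hf.integrable_abs_rpow.mono'
      (hsmooth.continuous.abs.rpow_const fun _ => .inr hpos.le).aestronglyMeasurable
      (.of_forall fun x => ?_),
    hf.integrable_norm_fderiv_sq.mono'
      ((hsmooth.continuous_fderiv one_ne_zero).norm.pow 2).aestronglyMeasurable
      (.of_forall fun x => ?_)⟩
  · rw [Real.norm_of_nonneg (by positivity)]
    exact Real.rpow_le_rpow (abs_nonneg _) (smoothAbs.abs_le_abs hε.le _) hpos.le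
  · rw [Real.norm_of_nonneg (by positivity)]
    exact pow_le_pow_left₀ (norm_nonneg _) (smoothAbs.norm_fderiv_comp_le hε.ne'
      (hf.contDiff.differentiable one_ne_zero x)) 2

lemma integral_norm_fderiv_smoothAbs_sq_le (hf : HasFiniteEnergy m f) {ε : ℝ} (hε : 0 < ε) :
    ∫ x, ‖fderiv ℝ (fun x => smoothAbs ε (f x)) x‖ ^ 2 ≤ ∫ x, ‖fderiv ℝ f x‖ ^ 2 :=
  integral_mono_of_nonneg (.of_forall fun x => by positivity) hf.integrable_norm_fderiv_sq
    (.of_forall fun x => pow_le_pow_left₀ (norm_nonneg _) (smoothAbs.norm_fderiv_comp_le hε.ne'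
      (hf.contDiff.differentiable one_ne_zero x)) 2)

lemma critInt_le (hm : 3 ≤ m) (hg : HasFiniteEnergy m g) (hfg : ∀ x, |f x| ≤ |g x|) :
    critInt m f ≤ critInt m g :=
  integral_mono_of_nonneg (.of_forall fun x => by positivity) (hg.integrable_abs_rpow)
    (.of_forall fun x => Real.rpow_le_rpow (abs_nonneg _) (hfg x) (critExponent_pos hm).le)

lemma tendsto_critInt_smoothAbs (hm : 3 ≤ m) (hf : HasFiniteEnergy m f) {ι : Type*}
    {l : Filter ι} [l.IsCountablyGenerated] {ε : ι → ℝ} (hε : Tendsto ε l (𝓝 0))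
    (hε_pos : ∀ i, 0 < ε i) :
    Tendsto (fun i => critInt m fun x => smoothAbs (ε i) (f x)) l (𝓝 (critInt m f)) := by
  have hpos := critExponent_pos hm
  simp only [critInt_eq]
  refine tendsto_integral_filter_of_dominated_convergence _
    (.of_forall fun i =>
      ((hf.smoothAbs_comp hm (hε_pos i)).integrable_abs_rpow).aestronglyMeasurable)
    (.of_forall fun i => .of_forall fun x => ?_) (hf.integrable_abs_rpow)
    (.of_forall fun x => ?_)
  · rw [Real.norm_of_nonneg (by positivity)]
    exact Real.rpow_le_rpow (abs_nonneg _) (smoothAbs.abs_le_abs (hε_pos i).le _) hpos.le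
  · simpa only [abs_abs] using (smoothAbs.tendsto_abs hε (f x)).abs.rpow_const (.inr hpos.le)

end HasFiniteEnergy

end FiniteEnergy

section Minimizers

variable {m : ℕ} {f g : EuclideanSpace ℝ (Fin m) → ℝ}

lemma sobolevQuot_nonneg {b : EuclideanSpace ℝ (Fin m) → ℝ} (hb : ∀ x, 0 ≤ b x)
    (f : EuclideanSpace ℝ (Fin m) → ℝ) : 0 ≤ sobolevQuot m b f :=
  div_nonneg (integral_nonneg fun x => add_nonneg (sq_nonneg _) (mul_nonneg (hb x) (sq_nonneg _)))
    (Real.rpow_nonneg (critInt_nonneg f) _)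

lemma sobolevQuot_zero_eq (f : EuclideanSpace ℝ (Fin m) → ℝ) :
    sobolevQuot m 0 f = (∫ x, ‖fderiv ℝ f x‖ ^ 2) / critInt m f ^ (((m : ℝ) - 2) / m) := by
  simp [sobolevQuot]

lemma critInt_rpow_mul_le_of_forall_le_sobolevQuot (hm : 3 ≤ m) {S : ℝ}
    (hS : ∀ g, Admissible m g → S ≤ sobolevQuot m 0 g) (hg : HasFiniteEnergy m g) :
    S * critInt m g ^ (((m : ℝ) - 2) / m) ≤ ∫ x, ‖fderiv ℝ g x‖ ^ 2 := by
  rcases (critInt_nonneg g).eq_or_lt with hzero | hpos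
  · rw [← hzero, Real.zero_rpow (sub_two_div_self_pos hm).ne', mul_zero]
    exact integral_nonneg fun x => sq_nonneg _
  · have hle := hS g ((admissible_iff).2 ⟨hg, hpos⟩)
    rwa [sobolevQuot_zero_eq, le_div_iff₀ (Real.rpow_pos_of_pos hpos _)] at hle

lemma critInt_smoothAbs_rpow_mul_le (hm : 3 ≤ m) {S : ℝ} (hS_nonneg : 0 ≤ S)
    (hS : ∀ g, Admissible m g → S ≤ sobolevQuot m 0 g) (hf : HasFiniteEnergy m f)
    {φ : EuclideanSpace ℝ (Fin m) → ℝ} (hφ : ContDiff ℝ 2 φ) (hφs : HasCompactSupport φ)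
    (hφ_nonneg : ∀ x, 0 ≤ φ x) {s : ℝ} (hs : 0 ≤ s) {ε : ℝ} (hε : 0 < ε) :
    S * critInt m (fun x => smoothAbs ε (f x)) ^ (((m : ℝ) - 2) / m) ≤
      (∫ x, ‖fderiv ℝ f x‖ ^ 2) - 2 * s * (∫ x, smoothAbs ε (f x) * Δ φ x) +
        s ^ 2 * ∫ x, ‖fderiv ℝ φ x‖ ^ 2 := by
  have hu := hf.smoothAbs_comp hm hε
  have hg := hu.add_const_mul_of_hasCompactSupport hm (hφ.of_le one_le_two) hφs s
  have hcrit : critInt m (fun x => smoothAbs ε (f x)) ≤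
      critInt m fun x => smoothAbs ε (f x) + s * φ x :=
    hg.critInt_le hm fun x => abs_le_abs_of_nonneg (smoothAbs.nonneg ε (f x))
      (le_add_of_nonneg_right (mul_nonneg hs (hφ_nonneg x)))
  calc S * critInt m (fun x => smoothAbs ε (f x)) ^ (((m : ℝ) - 2) / m)
      ≤ S * critInt m (fun x => smoothAbs ε (f x) + s * φ x) ^ (((m : ℝ) - 2) / m) :=
        mul_le_mul_of_nonneg_left
          (Real.rpow_le_rpow (critInt_nonneg _) hcrit (sub_two_div_self_pos hm).le) hS_nonneg
    _ ≤ ∫ x, ‖fderiv ℝ (fun x => smoothAbs ε (f x) + s * φ x) x‖ ^ 2 :=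
        critInt_rpow_mul_le_of_forall_le_sobolevQuot hm hS hg
    _ = (∫ x, ‖fderiv ℝ (fun x => smoothAbs ε (f x)) x‖ ^ 2) -
          2 * s * (∫ x, smoothAbs ε (f x) * Δ φ x) + s ^ 2 * ∫ x, ‖fderiv ℝ φ x‖ ^ 2 :=
        integral_norm_fderiv_add_const_mul_sq hu.contDiff hu.integrable_norm_fderiv_sq hφ hφs s
    _ ≤ _ := by linarith [hf.integral_norm_fderiv_smoothAbs_sq_le hε]

lemma critInt_rpow_mul_le_sub_integral_abs_mul_laplacian (hm : 3 ≤ m) {S : ℝ} (hS_nonneg : 0 ≤ S)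
    (hS : ∀ g, Admissible m g → S ≤ sobolevQuot m 0 g) (hf : HasFiniteEnergy m f)
    {φ : EuclideanSpace ℝ (Fin m) → ℝ} (hφ : ContDiff ℝ 2 φ) (hφs : HasCompactSupport φ)
    (hφ_nonneg : ∀ x, 0 ≤ φ x) {s : ℝ} (hs : 0 ≤ s) :
    S * critInt m f ^ (((m : ℝ) - 2) / m) ≤ (∫ x, ‖fderiv ℝ f x‖ ^ 2) -
      2 * s * (∫ x, |f x| * Δ φ x) + s ^ 2 * ∫ x, ‖fderiv ℝ φ x‖ ^ 2 := by
  have hε : Tendsto (fun n : ℕ => 1 / ((n : ℝ) + 1)) atTop (𝓝 0) :=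
    tendsto_one_div_add_atTop_nhds_zero_nat
  have hε_pos (n : ℕ) : 0 < 1 / ((n : ℝ) + 1) := Nat.one_div_pos_of_nat
  have hf_cont : Continuous f := hf.contDiff.continuous
  have hΔ : Continuous (Δ φ) := continuous_laplacian hφ
  have hint : Integrable fun x => f x * Δ φ x :=
    (hf_cont.mul hΔ).integrable_of_hasCompactSupport (hasCompactSupport_laplacian hφs).mul_left
  have hlim := smoothAbs.tendsto_integral_comp_mul hε (fun n => (hε_pos n).le)
    hf_cont.aestronglyMeasurable hΔ.aestronglyMeasurable hint
  exact le_of_tendsto_of_tendsto' (((hf.tendsto_critInt_smoothAbs hm hε hε_pos).rpow_const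
      (.inr (sub_two_div_self_pos hm).le)).const_mul S)
    (((hlim.const_mul (2 * s)).const_sub _).add_const _)
    fun n => critInt_smoothAbs_rpow_mul_le hm hS_nonneg hS hf hφ hφs hφ_nonneg hs (hε_pos n)

theorem isWeaklySuperharmonic_abs_of_forall_sobolevQuot_le (hm : 3 ≤ m) (hf : Admissible m f)
    (hmin : ∀ g, Admissible m g → sobolevQuot m 0 f ≤ sobolevQuot m 0 g) :
    IsWeaklySuperharmonic fun x => |f x| := by
  intro φ hφ hφs hφ_nonneg
  obtain ⟨hfin, hpos⟩ := (admissible_iff).1 hf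
  have hself : sobolevQuot m 0 f * critInt m f ^ (((m : ℝ) - 2) / m) =
      ∫ x, ‖fderiv ℝ f x‖ ^ 2 := by
    rw [sobolevQuot_zero_eq, div_mul_cancel₀ _ (Real.rpow_pos_of_pos hpos _).ne']
  set B := ∫ x, ‖fderiv ℝ φ x‖ ^ 2
  have hle {s : ℝ} (hs : 0 < s) : 2 * (∫ x, |f x| * Δ φ x) ≤ s * B := by
    have hvar := critInt_rpow_mul_le_sub_integral_abs_mul_laplacian hm
      (sobolevQuot_nonneg (b := 0) (fun _ => le_rfl) f) hmin hfin hφ hφs hφ_nonneg hs.le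
    refine le_of_mul_le_mul_left ?_ hs
    linarith
  have hlim : Tendsto (fun s => s * B) (𝓝[>] 0) (𝓝 0) := by
    simpa using (tendsto_id.mul_const B).mono_left (nhdsWithin_le_nhds (a := (0 : ℝ)))
  linarith [ge_of_tendsto hlim (eventually_mem_nhdsWithin.mono fun s hs => hle hs)]

theorem ne_zero_on_ball_of_forall_sobolevQuot_le (hm : 3 ≤ m) (hf : Admissible m f)
    (hmin : ∀ g, Admissible m g → sobolevQuot m 0 f ≤ sobolevQuot m 0 g)
    (c : EuclideanSpace ℝ (Fin m)) {r : ℝ} (hr : 0 < r) : ∃ x ∈ Metric.ball c r, f x ≠ 0 := by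
  by_contra! hball
  have hzero (x) : |f x| = 0 :=
    (isWeaklySuperharmonic_abs_of_forall_sobolevQuot_le hm hf hmin).eq_zero_of_eq_zero_on_ball
      hf.1.continuous.abs (fun x => abs_nonneg _) hr (fun x hx => abs_eq_zero.2 (hball x hx)) x
  have hcrit : critInt m f = 0 := by
    simp [critInt_eq, hzero, Real.zero_rpow (critExponent_pos hm).ne']
  exact hf.2.2.1.ne' hcrit

end Minimizers

section WeightedQuotient

variable {m : ℕ} {b f : EuclideanSpace ℝ (Fin m) → ℝ}

lemma integrable_abs_sq_rpow_critExponent (hf : HasFiniteEnergy m f) :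
    Integrable fun x => |f x ^ 2| ^ (critExponent m / 2) := by
  refine hf.integrable_abs_rpow.congr (.of_forall fun x => ?_)
  dsimp only
  rw [abs_pow, ← Real.rpow_natCast, ← Real.rpow_mul (abs_nonneg _)]
  congr 1
  push_cast
  ring

lemma integrable_mul_sq (hm : 3 ≤ m) (hb : AEStronglyMeasurable b)
    (hb_int : Integrable fun x => |b x| ^ ((m : ℝ) / 2)) (hf : HasFiniteEnergy m f) :
    Integrable fun x => b x * f x ^ 2 :=
  integrable_mul_of_integrable_rpow (holderConjugate_critExponent_div_two hm) hb hb_int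
    (hf.contDiff.continuous.pow 2).aestronglyMeasurable (integrable_abs_sq_rpow_critExponent hf)

lemma sobolevQuot_eq_add (hf : HasFiniteEnergy m f)
    (hint : Integrable fun x => b x * f x ^ 2) :
    sobolevQuot m b f =
      sobolevQuot m 0 f + (∫ x, b x * f x ^ 2) / critInt m f ^ (((m : ℝ) - 2) / m) := by
  rw [sobolevQuot, integral_add hf.integrable_norm_fderiv_sq hint, add_div, sobolevQuot_zero_eq]

lemma sobolevInf_le_sobolevQuot (hb : ∀ x, 0 ≤ b x) (hf : Admissible m f) :
    sobolevInf m b ≤ sobolevQuot m b f :=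
  csInf_le ⟨0, by rintro _ ⟨g, -, rfl⟩; exact sobolevQuot_nonneg hb g⟩ ⟨f, hf, rfl⟩

lemma sobolevQuot_zero_le (hb_nonneg : ∀ x, 0 ≤ b x) (hf : HasFiniteEnergy m f)
    (hint : Integrable fun x => b x * f x ^ 2) : sobolevQuot m 0 f ≤ sobolevQuot m b f := by
  rw [sobolevQuot_eq_add hf hint]
  exact le_add_of_nonneg_right (div_nonneg
    (integral_nonneg fun x => mul_nonneg (hb_nonneg x) (sq_nonneg _))
    (Real.rpow_nonneg (critInt_nonneg f) _))

lemma sobolevQuot_zero_lt (hb_cont : Continuous b)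
    (hb_nonneg : ∀ x, 0 ≤ b x) (hf : Admissible m f)
    (hint : Integrable fun x => b x * f x ^ 2) {x : EuclideanSpace ℝ (Fin m)} (hbx : 0 < b x)
    (hfx : f x ≠ 0) : sobolevQuot m 0 f < sobolevQuot m b f := by
  obtain ⟨hfin, hpos⟩ := admissible_iff.1 hf
  have hweight : 0 < ∫ x, b x * f x ^ 2 :=
    integral_pos_of_integrable_nonneg_nonzero (hb_cont.mul (hfin.contDiff.continuous.pow 2)) hint
      (fun x => mul_nonneg (hb_nonneg x) (sq_nonneg _)) (mul_ne_zero hbx.ne' (pow_ne_zero 2 hfx))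
  rw [sobolevQuot_eq_add hfin hint]
  exact lt_add_of_pos_right _ (div_pos hweight (Real.rpow_pos_of_pos hpos _))

lemma integrable_abs_rpow_of_le_div_one_add_norm_sq (hm : 0 < m)
    (hb_meas : AEStronglyMeasurable b) {C : ℝ}
    (hb_bound : ∀ x, |b x| ≤ C / (1 + ‖x‖ ^ 2) ^ 2) :
    Integrable fun x => |b x| ^ ((m : ℝ) / 2) := by
  have hC : 0 ≤ C := by simpa using (abs_nonneg _).trans (hb_bound 0)
  have hdecay : Integrable fun x : EuclideanSpace ℝ (Fin m) =>
      (1 + ‖x‖ ^ 2) ^ (-(2 * m : ℝ) / 2) :=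
    integrable_rpow_neg_one_add_norm_sq (by
      rw [finrank_euclideanSpace_fin]
      linarith [(Nat.cast_pos (α := ℝ)).2 hm])
  refine (hdecay.const_mul (C ^ ((m : ℝ) / 2))).mono'
    (hb_meas.norm.aemeasurable.pow_const _).aestronglyMeasurable (.of_forall fun x => ?_)
  have hpos : 0 < 1 + ‖x‖ ^ 2 := by positivity
  calc ‖|b x| ^ ((m : ℝ) / 2)‖ = |b x| ^ ((m : ℝ) / 2) := Real.norm_of_nonneg (by positivity)
    _ ≤ (C / (1 + ‖x‖ ^ 2) ^ 2) ^ ((m : ℝ) / 2) := by gcongr; exact hb_bound x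
    _ = C ^ ((m : ℝ) / 2) * (1 + ‖x‖ ^ 2) ^ (-(2 * m : ℝ) / 2) := by
      rw [Real.div_rpow hC (by positivity), ← Real.rpow_natCast, ← Real.rpow_mul hpos.le,
        div_eq_mul_inv, ← Real.rpow_neg hpos.le]
      congr 2
      push_cast
      ring

end WeightedQuotient

section Concentration

variable {m : ℕ} {b g : EuclideanSpace ℝ (Fin m) → ℝ}

lemma norm_fderiv_comp_inv_smul_sq {r : ℝ} (hr : 0 < r) (x : EuclideanSpace ℝ (Fin m)) :
    ‖fderiv ℝ (fun x => g (r⁻¹ • x)) x‖ ^ 2 = (r ^ 2)⁻¹ * ‖fderiv ℝ g (r⁻¹ • x)‖ ^ 2 := by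
  rw [fderiv_comp_smul, norm_smul, mul_pow, norm_inv, Real.norm_of_nonneg hr.le, inv_pow]

lemma critInt_comp_inv_smul {r : ℝ} (hr : 0 < r) (g : EuclideanSpace ℝ (Fin m) → ℝ) :
    critInt m (fun x => g (r⁻¹ • x)) = r ^ m * critInt m g := by
  simpa [critInt_eq] using
    Measure.integral_comp_inv_smul_of_nonneg volume (fun x => |g x| ^ critExponent m) hr.le

lemma Admissible.comp_inv_smul {r : ℝ} (hr : 0 < r) (hg : Admissible m g) :
    Admissible m fun x => g (r⁻¹ • x) := by
  obtain ⟨hsmooth, hgp, hpos, hg2⟩ := hg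
  have hr' : r⁻¹ ≠ 0 := inv_ne_zero hr.ne'
  refine ⟨hsmooth.comp (contDiff_const_smul r⁻¹), ?_, ?_, ?_⟩
  · exact (integrable_comp_smul_iff volume (fun x => |g x| ^ critExponent m) hr').2 hgp
  · rw [critInt_comp_inv_smul hr]
    positivity
  · simp only [norm_fderiv_comp_inv_smul_sq hr]
    exact ((integrable_comp_smul_iff volume _ hr').2 hg2).const_mul _

lemma sobolevQuot_comp_inv_smul (hm : 3 ≤ m) {r : ℝ} (hr : 0 < r)
    (b g : EuclideanSpace ℝ (Fin m) → ℝ) :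
    sobolevQuot m b (fun x => g (r⁻¹ • x)) = sobolevQuot m (fun x => r ^ 2 * b (r • x)) g := by
  have hm0 : (m : ℝ) ≠ 0 := by positivity
  have hden : (r ^ m * critInt m g) ^ (((m : ℝ) - 2) / m) =
      r ^ m * (r ^ 2)⁻¹ * critInt m g ^ (((m : ℝ) - 2) / m) := by
    rw [Real.mul_rpow (by positivity) (critInt_nonneg g), ← Real.rpow_natCast r m,
      ← Real.rpow_mul hr.le, mul_div_cancel₀ _ hm0, Real.rpow_sub hr, div_eq_mul_inv,
      Real.rpow_two]
  have hnum : ∫ x, (‖fderiv ℝ (fun x => g (r⁻¹ • x)) x‖ ^ 2 + b x * g (r⁻¹ • x) ^ 2) =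
      r ^ m * (r ^ 2)⁻¹ * ∫ x, (‖fderiv ℝ g x‖ ^ 2 + r ^ 2 * b (r • x) * g x ^ 2) := by
    have hintegrand (x : EuclideanSpace ℝ (Fin m)) :
        ‖fderiv ℝ (fun x => g (r⁻¹ • x)) x‖ ^ 2 + b x * g (r⁻¹ • x) ^ 2 =
          (r ^ 2)⁻¹ * (‖fderiv ℝ g (r⁻¹ • x)‖ ^ 2 +
            r ^ 2 * b (r • r⁻¹ • x) * g (r⁻¹ • x) ^ 2) := by
      rw [norm_fderiv_comp_inv_smul_sq hr, smul_inv_smul₀ hr.ne']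
      field_simp
    have hscale := Measure.integral_comp_inv_smul_of_nonneg volume
      (fun x => ‖fderiv ℝ g x‖ ^ 2 + r ^ 2 * b (r • x) * g x ^ 2) hr.le
    rw [finrank_euclideanSpace_fin, smul_eq_mul] at hscale
    simp only [hintegrand]
    rw [integral_const_mul, hscale]
    ring
  rw [sobolevQuot, critInt_comp_inv_smul hr, hnum, hden,
    mul_div_mul_left _ _ (by positivity), sobolevQuot]

lemma tendsto_sq_mul_comp_smul (hb : ContinuousAt b 0) (x : EuclideanSpace ℝ (Fin m)) {ι : Type*}
    {l : Filter ι} {r : ι → ℝ} (hr : Tendsto r l (𝓝 0)) :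
    Tendsto (fun i => r i ^ 2 * b (r i • x)) l (𝓝 0) := by
  have hsmul : Tendsto (fun i => r i • x) l (𝓝 0) := by simpa using hr.smul_const x
  simpa using (hr.pow 2).mul (hb.tendsto.comp hsmul)

lemma abs_sq_mul_comp_smul_rpow {r : ℝ} (hr : 0 < r) (b : EuclideanSpace ℝ (Fin m) → ℝ)
    (x : EuclideanSpace ℝ (Fin m)) :
    |r ^ 2 * b (r • x)| ^ ((m : ℝ) / 2) = r ^ m * |b (r • x)| ^ ((m : ℝ) / 2) := by
  have hpow : (r ^ 2) ^ ((m : ℝ) / 2) = r ^ m := by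
    rw [← Real.rpow_natCast r 2, ← Real.rpow_mul hr.le, ← Real.rpow_natCast r m]
    congr 1
    push_cast
    ring
  rw [abs_mul, abs_of_pos (pow_pos hr 2), Real.mul_rpow (by positivity) (abs_nonneg _), hpow]

lemma integral_abs_sq_mul_comp_smul_rpow {r : ℝ} (hr : 0 < r)
    (b : EuclideanSpace ℝ (Fin m) → ℝ) :
    ∫ x, |r ^ 2 * b (r • x)| ^ ((m : ℝ) / 2) = ∫ x, |b x| ^ ((m : ℝ) / 2) := by
  simp only [abs_sq_mul_comp_smul_rpow hr]
  rw [integral_const_mul, Measure.integral_comp_smul_of_nonneg volume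
    (fun x => |b x| ^ ((m : ℝ) / 2)) r (hR := hr.le), finrank_euclideanSpace_fin, smul_eq_mul,
    mul_inv_cancel_left₀ (pow_pos hr m).ne']

lemma integrable_abs_sq_mul_comp_smul_rpow {r : ℝ} (hr : 0 < r)
    (hb_int : Integrable fun x => |b x| ^ ((m : ℝ) / 2)) :
    Integrable fun x => |r ^ 2 * b (r • x)| ^ ((m : ℝ) / 2) := by
  simp only [abs_sq_mul_comp_smul_rpow hr]
  exact ((integrable_comp_smul_iff volume _ hr.ne').2 hb_int).const_mul _

theorem sobolevInf_le_sobolevQuot_zero (hm : 3 ≤ m) (hb_cont : Continuous b)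
    (hb_nonneg : ∀ x, 0 ≤ b x) (hb_int : Integrable fun x => |b x| ^ ((m : ℝ) / 2))
    (hg : Admissible m g) : sobolevInf m b ≤ sobolevQuot m 0 g := by
  have hfin := (admissible_iff.1 hg).1
  set r : ℕ → ℝ := fun n => 1 / ((n : ℝ) + 1)
  have hr : Tendsto r atTop (𝓝 0) := tendsto_one_div_add_atTop_nhds_zero_nat
  have hr_pos (n : ℕ) : 0 < r n := Nat.one_div_pos_of_nat
  set w : ℕ → EuclideanSpace ℝ (Fin m) → ℝ := fun n x => r n ^ 2 * b (r n • x)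
  have hw_meas (n : ℕ) : AEStronglyMeasurable (w n) :=
    (by fun_prop : Continuous (w n)).aestronglyMeasurable
  have hw_int (n : ℕ) := integrable_abs_sq_mul_comp_smul_rpow (hr_pos n) hb_int
  have hweight : Tendsto (fun n => ∫ x, w n x * g x ^ 2) atTop (𝓝 0) :=
    tendsto_integral_mul_of_integral_rpow_le (holderConjugate_critExponent_div_two hm) hw_meas
      hw_int (fun n => (integral_abs_sq_mul_comp_smul_rpow (hr_pos n) b).le)
      (.of_forall fun x => tendsto_sq_mul_comp_smul hb_cont.continuousAt x hr)
      (hfin.contDiff.continuous.pow 2).aestronglyMeasurable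
      (integrable_abs_sq_rpow_critExponent hfin)
  have hquot : Tendsto (fun n => sobolevQuot m (w n) g) atTop (𝓝 (sobolevQuot m 0 g)) := by
    simp only [sobolevQuot_eq_add hfin (integrable_mul_sq hm (hw_meas _) (hw_int _) hfin)]
    simpa using (hweight.div_const _).const_add (sobolevQuot m 0 g)
  refine ge_of_tendsto' hquot fun n => ?_
  rw [← sobolevQuot_comp_inv_smul hm (hr_pos n)]
  exact sobolevInf_le_sobolevQuot hb_nonneg (hg.comp_inv_smul (hr_pos n))

end Concentration

theorem weighted_sobolev_inf_not_attained_general (m : ℕ) (hm : 3 ≤ m)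
    (b : EuclideanSpace ℝ (Fin m) → ℝ) (hb_cont : Continuous b) (hb_nonneg : ∀ x, 0 ≤ b x)
    (hb_int : Integrable fun x => |b x| ^ ((m : ℝ) / 2)) (hb_ne : ∃ x₀, 0 < b x₀) :
    ∀ f, Admissible m f → sobolevInf m b < sobolevQuot m b f := by
  intro f hf
  by_contra! hattained
  have hfin : HasFiniteEnergy m f := (admissible_iff.1 hf).1
  have hint : Integrable fun x => b x * f x ^ 2 :=
    integrable_mul_sq hm hb_cont.aestronglyMeasurable hb_int hfin
  have hle_zero (g) (hg : Admissible m g) : sobolevQuot m b f ≤ sobolevQuot m 0 g :=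
    hattained.trans (sobolevInf_le_sobolevQuot_zero hm hb_cont hb_nonneg hb_int hg)
  have hmin (g) (hg : Admissible m g) : sobolevQuot m 0 f ≤ sobolevQuot m 0 g :=
    (sobolevQuot_zero_le hb_nonneg hfin hint).trans (hle_zero g hg)
  obtain ⟨x₀, hx₀⟩ := hb_ne
  obtain ⟨r, hr, hball⟩ :=
    Metric.eventually_nhds_iff_ball.1 (hb_cont.continuousAt.eventually_const_lt hx₀)
  obtain ⟨x, hx, hfx⟩ := ne_zero_on_ball_of_forall_sobolevQuot_le hm hf hmin x₀ hr
  exact (sobolevQuot_zero_lt hb_cont hb_nonneg hf hint (hball x hx) hfx).not_ge (hle_zero f hf)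

/-- if `0 ≤ b̃(x) ≤ C(1+|x|²)⁻²` and `b̃ ≢ 0`, then the infimum `S_{b̃}`
is not attained: every admissible `f` satisfies `Q_{b̃}(f) > S_{b̃}`. -/
theorem weighted_sobolev_inf_not_attained (m : ℕ) (hm : 3 ≤ m)
    (b : EuclideanSpace ℝ (Fin m) → ℝ) (hb_cont : Continuous b)
    (C : ℝ) (hC : 0 < C)
    (hb_nonneg : ∀ x, 0 ≤ b x)
    (hb_bound : ∀ x, b x ≤ C / (1 + ‖x‖ ^ 2) ^ 2)
    (hb_ne : ∃ x₀, 0 < b x₀) :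
    ∀ f, Admissible m f → sobolevInf m b < sobolevQuot m b f :=
  weighted_sobolev_inf_not_attained_general m hm b hb_cont hb_nonneg
    (integrable_abs_rpow_of_le_div_one_add_norm_sq (by omega) hb_cont.aestronglyMeasurable
      fun x => (abs_of_nonneg (hb_nonneg x)).trans_le (hb_bound x)) hb_ne
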